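/- Substitution lemma for the weight, linear case: let V be a well-formed closed SHOπ value (⊩ V) and n ≥ m ≥ 1 natural numbers. If Γ,x ⊩ R is a well-formed SHOπ process judgement with x linear, then W_m(R[V/x]) ≤ W_n(R) + W_n(V); likewise if Γ,x ⊩ W is a well-formed value judgement with x linear, then W_m(W[V/x]) ≤ W_n(W) + W_n(V). -/

import Mathlib

/-! The weight `wV n` is monotone in `n` and invariant under lifting.  A linear variable occurs
exactly once, and never below a `!`, so a substitution for it adds the weight of the substituted
value at one place, not multiplied by the parameter of the weight.  Formally: at each binary
construct the entry of a linear variable is sent to exactly one of the two premises; in the other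
one the variable is absent, and there the substitution leaves the weight unchanged up to
monotonicity.  The `!` case cannot arise, since `BangE` has no linear entry as its target.
The induction is on the syntax, for an arbitrary index `k` and an arbitrary substituted value,
so that it passes under binders. -/

/-! Syntax of LHOπ / SHOπ processes and values (variables in de Bruijn style,
channels as names). -/

mutual
inductive Val : Type
  | star : Val
  | var : ℕ → Val
  | lam : Proc → Val
  | blam : Proc → Val
  | bang : Val → Val
inductive Proc : Type
  | nil : Proc
  | par : Proc → Proc → Proc
  | inp : ℕ → Proc → Proc
  | binp : ℕ → Proc → Proc
  | out : ℕ → Val → Proc → Proc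
  | nu : ℕ → Proc → Proc
  | app : Val → Val → Proc
end

/-! Lifting and capture-avoiding substitution. -/

mutual
def liftV (c : ℕ) : Val → Val
  | .star => .star
  | .var x => if x < c then .var x else .var (x + 1)
  | .lam P => .lam (liftP (c + 1) P)
  | .blam P => .blam (liftP (c + 1) P)
  | .bang V => .bang (liftV c V)
def liftP (c : ℕ) : Proc → Proc
  | .nil => .nil
  | .par P Q => .par (liftP c P) (liftP c Q)
  | .inp a P => .inp a (liftP (c + 1) P)
  | .binp a P => .binp a (liftP (c + 1) P)
  | .out a V P => .out a (liftV c V) (liftP c P)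
  | .nu a P => .nu a (liftP c P)
  | .app V W => .app (liftV c V) (liftV c W)
end

mutual
def substV (U : Val) (k : ℕ) : Val → Val
  | .star => .star
  | .var x => if x = k then U else if x < k then .var x else .var (x - 1)
  | .lam P => .lam (substP (liftV 0 U) (k + 1) P)
  | .blam P => .blam (substP (liftV 0 U) (k + 1) P)
  | .bang V => .bang (substV U k V)
def substP (U : Val) (k : ℕ) : Proc → Proc
  | .nil => .nil
  | .par P Q => .par (substP U k P) (substP U k Q)
  | .inp a P => .inp a (substP (liftV 0 U) (k + 1) P)
  | .binp a P => .binp a (substP (liftV 0 U) (k + 1) P)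
  | .out a V P => .out a (substV U k V) (substP U k P)
  | .nu a P => .nu a (substP U k P)
  | .app V W => .app (substV U k V) (substV U k W)
end

/-! Free channels and channel renaming (for α-conversion of restrictions). -/

mutual
def fcV : Val → Finset ℕ
  | .star => ∅
  | .var _ => ∅
  | .lam P => fcP P
  | .blam P => fcP P
  | .bang V => fcV V
def fcP : Proc → Finset ℕ
  | .nil => ∅
  | .par P Q => fcP P ∪ fcP Q
  | .inp a P => insert a (fcP P)
  | .binp a P => insert a (fcP P)
  | .out a V P => insert a (fcV V ∪ fcP P)
  | .nu a P => fcP P \ {a}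
  | .app V W => fcV V ∪ fcV W
end

mutual
def chV (a b : ℕ) : Val → Val
  | .star => .star
  | .var x => .var x
  | .lam P => .lam (chP a b P)
  | .blam P => .blam (chP a b P)
  | .bang V => .bang (chV a b V)
def chP (a b : ℕ) : Proc → Proc
  | .nil => .nil
  | .par P Q => .par (chP a b P) (chP a b Q)
  | .inp c P => .inp (if c = a then b else c) (chP a b P)
  | .binp c P => .binp (if c = a then b else c) (chP a b P)
  | .out c V P => .out (if c = a then b else c) (chV a b V) (chP a b P)
  | .nu c P => if c = a then .nu c P else .nu c (chP a b P)
  | .app V W => .app (chV a b V) (chV a b W)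
end

/-! Structural congruence: the smallest congruence containing α-equivalence
(for channel restrictions; α-equivalence of variables is syntactic identity in
de Bruijn style), associativity and commutativity of parallel composition,
exchange of restrictions, and scope extrusion.  No garbage-collection laws. -/

mutual
inductive SCV : Val → Val → Prop
  | refl (V) : SCV V V
  | symm : SCV V W → SCV W V
  | trans : SCV U V → SCV V W → SCV U W
  | lam : SCP P Q → SCV (.lam P) (.lam Q)
  | blam : SCP P Q → SCV (.blam P) (.blam Q)
  | bang : SCV V W → SCV (.bang V) (.bang W)
inductive SCP : Proc → Proc → Prop
  | refl (P) : SCP P P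
  | symm : SCP P Q → SCP Q P
  | trans : SCP P Q → SCP Q R → SCP P R
  | par : SCP P P' → SCP Q Q' → SCP (.par P Q) (.par P' Q')
  | inp : SCP P Q → SCP (.inp a P) (.inp a Q)
  | binp : SCP P Q → SCP (.binp a P) (.binp a Q)
  | out : SCV V W → SCP P Q → SCP (.out a V P) (.out a W Q)
  | nu : SCP P Q → SCP (.nu a P) (.nu a Q)
  | app : SCV V V' → SCV W W' → SCP (.app V W) (.app V' W')
  | assoc : SCP (.par P (.par Q R)) (.par (.par P Q) R)
  | comm : SCP (.par P Q) (.par Q P)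
  | nuswap : SCP (.nu a (.nu b P)) (.nu b (.nu a P))
  | extrude : a ∉ fcP Q → SCP (.nu a (.par P Q)) (.par (.nu a P) Q)
  | alpha : b ∉ fcP P → SCP (.nu a P) (.nu b (chP a b P))
end

/-! Reduction. -/

inductive Red : Proc → Proc → Prop
  | comm : Red (.par (.out a V P) (.inp a Q)) (.par P (substP V 0 Q))
  | bcomm : Red (.par (.out a (.bang V) P) (.binp a Q)) (.par P (substP V 0 Q))
  | beta : Red (.app (.lam P) V) (substP V 0 P)
  | bbeta : Red (.app (.blam P) (.bang V)) (substP V 0 P)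
  | parL : Red P Q → Red (.par P R) (.par Q R)
  | res : Red P Q → Red (.nu a P) (.nu a Q)
  | struct : SCP P P' → Red P' Q' → SCP Q' Q → Red P Q

/-- `m`-step reduction. -/
inductive RedN : ℕ → Proc → Proc → Prop
  | zero : RedN 0 P P
  | succ : Red P Q → RedN n Q R → RedN (n + 1) P R

/-! SHOπ well-formation.  A context entry is `none` (absent) or a marker:
linear `x`, nonlinear `!x`, or nonlinear `§x`. -/

inductive SMark : Type
  | lin : SMark
  | bang : SMark
  | para : SMark
deriving DecidableEq

abbrev Ctx := List (Option SMark)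

/-- Contexts made only of §-marked (or absent) variables: these admit
weakening. -/
def ParaOnly (Γ : Ctx) : Prop := ∀ e ∈ Γ, e = none ∨ e = some .para

/-- Splitting one context entry between the two premises of a binary rule:
linear and !-variables go to exactly one premise, §-variables may be shared
(implicit contraction). -/
inductive SplitE : Option SMark → Option SMark → Option SMark → Prop
  | none : SplitE none none none
  | linL : SplitE (some .lin) (some .lin) none
  | linR : SplitE (some .lin) none (some .lin)
  | bangL : SplitE (some .bang) (some .bang) none
  | bangR : SplitE (some .bang) none (some .bang)
  | paraL : SplitE (some .para) (some .para) none
  | paraR : SplitE (some .para) none (some .para)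
  | paraB : SplitE (some .para) (some .para) (some .para)

inductive Split : Ctx → Ctx → Ctx → Prop
  | nil : Split [] [] []
  | cons : SplitE e e₁ e₂ → Split Γ Γ₁ Γ₂ → Split (e :: Γ) (e₁ :: Γ₁) (e₂ :: Γ₂)

/-- Entry-wise relation between the context of `V` and the context of `!V`:
linear variables become !-marked ones, and weakening by §-variables is
allowed.  §- and !-variables may not appear inside a !-box. -/
inductive BangE : Option SMark → Option SMark → Prop
  | lin : BangE (some .lin) (some .bang)
  | none : BangE none none
  | para : BangE none (some .para)

inductive BangCtx : Ctx → Ctx → Prop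
  | nil : BangCtx [] []
  | cons : BangE e e' → BangCtx Γ Γ' → BangCtx (e :: Γ) (e' :: Γ')

mutual
inductive WfV : Ctx → Val → Prop
  | star : ParaOnly Γ → WfV Γ .star
  | varLin : ParaOnly Γ → WfV (some .lin :: Γ) (.var 0)
  | varPara : ParaOnly Γ → WfV (some .para :: Γ) (.var 0)
  | varThere : (e = none ∨ e = some SMark.para) → WfV Γ (.var x) →
      WfV (e :: Γ) (.var (x + 1))
  | lam : WfP (some .lin :: Γ) P → WfV Γ (.lam P)
  | blamBang : WfP (some .bang :: Γ) P → WfV Γ (.blam P)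
  | blamPara : WfP (some .para :: Γ) P → WfV Γ (.blam P)
  | bang : BangCtx Γ Δ → WfV Γ V → WfV Δ (.bang V)
inductive WfP : Ctx → Proc → Prop
  | nil : ParaOnly Γ → WfP Γ .nil
  | par : Split Γ Γ₁ Γ₂ → WfP Γ₁ P → WfP Γ₂ Q → WfP Γ (.par P Q)
  | inp : WfP (some .lin :: Γ) P → WfP Γ (.inp a P)
  | binpBang : WfP (some .bang :: Γ) P → WfP Γ (.binp a P)
  | binpPara : WfP (some .para :: Γ) P → WfP Γ (.binp a P)
  | out : Split Γ Γ₁ Γ₂ → WfV Γ₁ V → WfP Γ₂ P → WfP Γ (.out a V P)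
  | nu : WfP Γ P → WfP Γ (.nu a P)
  | app : Split Γ Γ₁ Γ₂ → WfV Γ₁ V → WfV Γ₂ W → WfP Γ (.app V W)
end

/-! Measures: size, box depth, free occurrences, duplicability factor,
parametrized weight, weight. -/

mutual
def sizeV : Val → ℕ
  | .star => 1
  | .var _ => 1
  | .lam P => sizeP P + 1
  | .blam P => sizeP P + 1
  | .bang V => sizeV V + 1
def sizeP : Proc → ℕ
  | .nil => 1
  | .par P Q => sizeP P + sizeP Q + 1
  | .inp _ P => sizeP P + 1
  | .binp _ P => sizeP P + 1
  | .out _ V P => sizeV V + sizeP P + 1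
  | .nu _ P => sizeP P + 1
  | .app V W => sizeV V + sizeV W + 1
end

mutual
def bdV : Val → ℕ
  | .star => 0
  | .var _ => 0
  | .lam P => bdP P
  | .blam P => bdP P
  | .bang V => bdV V + 1
def bdP : Proc → ℕ
  | .nil => 0
  | .par P Q => max (bdP P) (bdP Q)
  | .inp _ P => bdP P
  | .binp _ P => bdP P
  | .out _ V P => max (bdV V) (bdP P)
  | .nu _ P => bdP P
  | .app V W => max (bdV V) (bdV W)
end

-- Number of free occurrences of the variable (de Bruijn index) `k`.
mutual
def foV (k : ℕ) : Val → ℕ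
  | .star => 0
  | .var x => if x = k then 1 else 0
  | .lam P => foP (k + 1) P
  | .blam P => foP (k + 1) P
  | .bang V => foV k V
def foP (k : ℕ) : Proc → ℕ
  | .nil => 0
  | .par P Q => foP k P + foP k Q
  | .inp _ P => foP (k + 1) P
  | .binp _ P => foP (k + 1) P
  | .out _ V P => foV k V + foP k P
  | .nu _ P => foP k P
  | .app V W => foV k V + foV k W
end

-- Duplicability factor.
mutual
def dV : Val → ℕ
  | .star => 1
  | .var _ => 1
  | .lam P => max (dP P) (foP 0 P)
  | .blam P => max (dP P) (foP 0 P)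
  | .bang V => dV V
def dP : Proc → ℕ
  | .nil => 1
  | .par P Q => max (dP P) (dP Q)
  | .inp _ P => max (dP P) (foP 0 P)
  | .binp _ P => max (dP P) (foP 0 P)
  | .out _ V P => max (dV V) (dP P)
  | .nu _ P => dP P
  | .app V W => max (dV V) (dV W)
end

-- `n`-parametrized weight.
mutual
def wV (n : ℕ) : Val → ℕ
  | .star => 1
  | .var _ => 1
  | .lam P => wP n P
  | .blam P => wP n P
  | .bang V => n * wV n V + 1
def wP (n : ℕ) : Proc → ℕ
  | .nil => 1
  | .par P Q => wP n P + wP n Q + 1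
  | .inp _ P => wP n P + 1
  | .binp _ P => wP n P + 1
  | .out _ V P => wV n V + wP n P
  | .nu _ P => wP n P
  | .app V W => wV n V + wV n W + 1
end

/-- The weight of a process. -/
def weightP (P : Proc) : ℕ := wP (dP P) P
/-- The weight of a value. -/
def weightV (V : Val) : ℕ := wV (dV V) V

/-! ### Weights under change of parameter and lifting -/

mutual
theorem wV_mono {m n : ℕ} (h : m ≤ n) : ∀ V : Val, wV m V ≤ wV n V
  | .star => by simp [wV]
  | .var _ => by simp [wV]
  | .lam P => by simpa [wV] using wP_mono h P
  | .blam P => by simpa [wV] using wP_mono h P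
  | .bang V => by
      have := Nat.mul_le_mul h (wV_mono h V)
      simpa [wV] using this
theorem wP_mono {m n : ℕ} (h : m ≤ n) : ∀ P : Proc, wP m P ≤ wP n P
  | .nil => by simp [wP]
  | .par P Q => by
      have := wP_mono h P
      have := wP_mono h Q
      simp only [wP]; omega
  | .inp _ P => by simpa [wP] using wP_mono h P
  | .binp _ P => by simpa [wP] using wP_mono h P
  | .out _ V P => by
      have := wV_mono h V
      have := wP_mono h P
      simp only [wP]; omega
  | .nu _ P => by simpa [wP] using wP_mono h P
  | .app V W => by
      have := wV_mono h V
      have := wV_mono h W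
      simp only [wP]; omega
end

mutual
theorem wV_lift (n : ℕ) : ∀ (c : ℕ) (V : Val), wV n (liftV c V) = wV n V
  | _, .star => by simp [liftV]
  | c, .var x => by
      simp only [liftV]; split <;> simp [wV]
  | c, .lam P => by simp [liftV, wV, wP_lift n (c + 1) P]
  | c, .blam P => by simp [liftV, wV, wP_lift n (c + 1) P]
  | c, .bang V => by simp [liftV, wV, wV_lift n c V]
theorem wP_lift (n : ℕ) : ∀ (c : ℕ) (P : Proc), wP n (liftP c P) = wP n P
  | _, .nil => by simp [liftP]
  | c, .par P Q => by simp [liftP, wP, wP_lift n c P, wP_lift n c Q]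
  | c, .inp _ P => by simp [liftP, wP, wP_lift n (c + 1) P]
  | c, .binp _ P => by simp [liftP, wP, wP_lift n (c + 1) P]
  | c, .out _ V P => by simp [liftP, wP, wV_lift n c V, wP_lift n c P]
  | c, .nu _ P => by simp [liftP, wP, wP_lift n c P]
  | c, .app V W => by simp [liftP, wP, wV_lift n c V, wV_lift n c W]
end

/-! ### Absent and linear entries of contexts -/

theorem Split.absent {Γ Γ₁ Γ₂ : Ctx} (h : Split Γ Γ₁ Γ₂) : ∀ {k : ℕ},
    Γ[k]? = some none → Γ₁[k]? = some none ∧ Γ₂[k]? = some none := by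
  induction h with
  | nil => intro k hk; simp at hk
  | cons he _ ih =>
    intro k hk
    cases k with
    | zero => cases he <;> simp_all
    | succ k => simpa using ih (by simpa using hk)

/-- A linear variable goes to exactly one side of a split. -/
theorem Split.linear {Γ Γ₁ Γ₂ : Ctx} (h : Split Γ Γ₁ Γ₂) : ∀ {k : ℕ},
    Γ[k]? = some (some .lin) →
      (Γ₁[k]? = some (some .lin) ∧ Γ₂[k]? = some none) ∨
      (Γ₁[k]? = some none ∧ Γ₂[k]? = some (some .lin)) := by
  induction h with
  | nil => intro k hk; simp at hk
  | cons he _ ih =>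
    intro k hk
    cases k with
    | zero => cases he <;> simp_all
    | succ k => simpa using ih (by simpa using hk)

theorem BangCtx.absent_or_ne {Γ Δ : Ctx} (h : BangCtx Γ Δ) : ∀ {k : ℕ},
    (Δ[k]? = some none → Γ[k]? = some none) ∧ Δ[k]? ≠ some (some .lin) := by
  induction h with
  | nil => intro k; simp
  | cons he _ ih =>
    intro k
    cases k with
    | zero => cases he <;> simp
    | succ k => simpa using ih (k := k)

theorem WfV.var_present : ∀ {x : ℕ} {Γ : Ctx}, WfV Γ (.var x) → Γ[x]? ≠ some none
  | 0, _, h => by cases h <;> simp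
  | x + 1, _, h => by
      cases h with
      | varThere _ h => simpa using h.var_present

/-! ### Substitution for absent and linear variables -/

mutual
/-- Substituting for an absent variable does not add weight: the substituted value is discarded. -/
theorem wV_subst_absent {m n : ℕ} (h : m ≤ n) : ∀ (W U : Val) (k : ℕ) (Γ : Ctx), WfV Γ W →
    Γ[k]? = some none → wV m (substV U k W) ≤ wV n W
  | .star, _, _, _, _, _ => by simp [substV, wV]
  | .var x, U, k, Γ, hW, hk => by
      have hx : x ≠ k := by
        rintro rfl
        exact hW.var_present hk
      simp only [substV, if_neg hx]
      split <;> simp [wV]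
  | .lam P, U, k, Γ, hW, hk => by
      simp only [substV, wV]
      cases hW with
      | lam hP => exact wP_subst_absent h P _ (k + 1) _ hP (by simpa using hk)
  | .blam P, U, k, Γ, hW, hk => by
      simp only [substV, wV]
      cases hW with
      | blamBang hP => exact wP_subst_absent h P _ (k + 1) _ hP (by simpa using hk)
      | blamPara hP => exact wP_subst_absent h P _ (k + 1) _ hP (by simpa using hk)
  | .bang V, U, k, Γ, hW, hk => by
      simp only [substV, wV]
      cases hW with
      | bang hB hV =>
        have := wV_subst_absent h V U k _ hV (hB.absent_or_ne.1 hk)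
        gcongr
theorem wP_subst_absent {m n : ℕ} (h : m ≤ n) : ∀ (R : Proc) (U : Val) (k : ℕ) (Γ : Ctx),
    WfP Γ R → Γ[k]? = some none → wP m (substP U k R) ≤ wP n R
  | .nil, _, _, _, _, _ => by simp [substP, wP]
  | .par P Q, U, k, Γ, hR, hk => by
      simp only [substP, wP]
      cases hR with
      | par hs hP hQ =>
        have h1 := wP_subst_absent h P U k _ hP (hs.absent hk).1
        have h2 := wP_subst_absent h Q U k _ hQ (hs.absent hk).2
        omega
  | .inp _ P, U, k, Γ, hR, hk => by
      simp only [substP, wP]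
      cases hR with
      | inp hP => exact Nat.succ_le_succ (wP_subst_absent h P _ (k + 1) _ hP (by simpa using hk))
  | .binp _ P, U, k, Γ, hR, hk => by
      simp only [substP, wP]
      cases hR with
      | binpBang hP =>
        exact Nat.succ_le_succ (wP_subst_absent h P _ (k + 1) _ hP (by simpa using hk))
      | binpPara hP =>
        exact Nat.succ_le_succ (wP_subst_absent h P _ (k + 1) _ hP (by simpa using hk))
  | .out _ V P, U, k, Γ, hR, hk => by
      simp only [substP, wP]
      cases hR with
      | out hs hV hP =>
        have h1 := wV_subst_absent h V U k _ hV (hs.absent hk).1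
        have h2 := wP_subst_absent h P U k _ hP (hs.absent hk).2
        omega
  | .nu _ P, U, k, Γ, hR, hk => by
      simp only [substP, wP]
      cases hR with
      | nu hP => exact wP_subst_absent h P U k _ hP hk
  | .app V W, U, k, Γ, hR, hk => by
      simp only [substP, wP]
      cases hR with
      | app hs hV hW =>
        have h1 := wV_subst_absent h V U k _ hV (hs.absent hk).1
        have h2 := wV_subst_absent h W U k _ hW (hs.absent hk).2
        omega
end

mutual
theorem wV_subst_linear {m n : ℕ} (h : m ≤ n) : ∀ (W U : Val) (k : ℕ) (Γ : Ctx), WfV Γ W →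
    Γ[k]? = some (some .lin) → wV m (substV U k W) ≤ wV n W + wV n U
  | .star, _, _, _, _, _ => by simp [substV, wV]
  | .var x, U, k, Γ, hW, hk => by
      have := wV_mono h U
      simp only [substV]
      split
      · simp only [wV]; omega
      · split <;> simp [wV]
  | .lam P, U, k, Γ, hW, hk => by
      simp only [substV, wV]
      cases hW with
      | lam hP =>
        simpa only [wV_lift] using
          wP_subst_linear h P (liftV 0 U) (k + 1) _ hP (by simpa using hk)
  | .blam P, U, k, Γ, hW, hk => by
      simp only [substV, wV]
      cases hW with
      | blamBang hP =>
        simpa only [wV_lift] using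
          wP_subst_linear h P (liftV 0 U) (k + 1) _ hP (by simpa using hk)
      | blamPara hP =>
        simpa only [wV_lift] using
          wP_subst_linear h P (liftV 0 U) (k + 1) _ hP (by simpa using hk)
  | .bang V, U, k, Γ, hW, hk => by
      cases hW with
      | bang hB _ => exact absurd hk hB.absent_or_ne.2
theorem wP_subst_linear {m n : ℕ} (h : m ≤ n) : ∀ (R : Proc) (U : Val) (k : ℕ) (Γ : Ctx),
    WfP Γ R → Γ[k]? = some (some .lin) → wP m (substP U k R) ≤ wP n R + wV n U
  | .nil, _, _, _, _, _ => by simp [substP, wP]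
  | .par P Q, U, k, Γ, hR, hk => by
      simp only [substP, wP]
      cases hR with
      | par hs hP hQ =>
        rcases hs.linear hk with ⟨hl, hr⟩ | ⟨hl, hr⟩
        · have h1 := wP_subst_linear h P U k _ hP hl
          have h2 := wP_subst_absent h Q U k _ hQ hr
          omega
        · have h1 := wP_subst_absent h P U k _ hP hl
          have h2 := wP_subst_linear h Q U k _ hQ hr
          omega
  | .inp _ P, U, k, Γ, hR, hk => by
      simp only [substP, wP]
      cases hR with
      | inp hP =>
        have := wP_subst_linear h P (liftV 0 U) (k + 1) _ hP (by simpa using hk)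
        rw [wV_lift] at this
        omega
  | .binp _ P, U, k, Γ, hR, hk => by
      simp only [substP, wP]
      cases hR with
      | binpBang hP =>
        have := wP_subst_linear h P (liftV 0 U) (k + 1) _ hP (by simpa using hk)
        rw [wV_lift] at this
        omega
      | binpPara hP =>
        have := wP_subst_linear h P (liftV 0 U) (k + 1) _ hP (by simpa using hk)
        rw [wV_lift] at this
        omega
  | .out _ V P, U, k, Γ, hR, hk => by
      simp only [substP, wP]
      cases hR with
      | out hs hV hP =>
        rcases hs.linear hk with ⟨hl, hr⟩ | ⟨hl, hr⟩
        · have h1 := wV_subst_linear h V U k _ hV hl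
          have h2 := wP_subst_absent h P U k _ hP hr
          omega
        · have h1 := wV_subst_absent h V U k _ hV hl
          have h2 := wP_subst_linear h P U k _ hP hr
          omega
  | .nu _ P, U, k, Γ, hR, hk => by
      simp only [substP, wP]
      cases hR with
      | nu hP => exact wP_subst_linear h P U k _ hP hk
  | .app V W, U, k, Γ, hR, hk => by
      simp only [substP, wP]
      cases hR with
      | app hs hV hW =>
        rcases hs.linear hk with ⟨hl, hr⟩ | ⟨hl, hr⟩
        · have h1 := wV_subst_linear h V U k _ hV hl
          have h2 := wV_subst_absent h W U k _ hW hr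
          omega
        · have h1 := wV_subst_absent h V U k _ hV hl
          have h2 := wV_subst_linear h W U k _ hW hr
          omega
end

/-- Substitution lemma for the weight, linear case:  for a well-formed closed
value `V`, `n ≥ m ≥ 1`, and `R` (resp. `W`) well formed in a context whose
variable `x` (de Bruijn index `0`) is linear,
`W_m(R[V/x]) ≤ W_n(R) + W_n(V)` (and similarly for values). -/
theorem weight_subst_linear {V : Val} (hV : WfV [] V) {n m : ℕ}
    (hm : 1 ≤ m) (hmn : m ≤ n) :
    (∀ (Γ : Ctx) (R : Proc), WfP (some SMark.lin :: Γ) R →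
        wP m (substP V 0 R) ≤ wP n R + wV n V) ∧
    (∀ (Γ : Ctx) (W : Val), WfV (some SMark.lin :: Γ) W →
        wV m (substV V 0 W) ≤ wV n W + wV n V) := by
  exact ⟨fun Γ R hR => wP_subst_linear hmn R V 0 _ hR rfl,
    fun Γ W hW => wV_subst_linear hmn W V 0 _ hW rfl⟩
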